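/- arXiv:0708.2138 — 4 statements merged into one kernel-verified Lean document; each statement's English description precedes it below -/
import Mathlib

section
/- Let α_1, …, α_l be linearly independent vectors in a real inner product space V such that (α_i, α_j) ≤ 0 for all i ≠ j. Let I be a nonempty subset of {1, …, l} and let μ = Σ_{i∈I} m_i α_i − Σ_{i∉I} m_i α_i, where the m_i are rational numbers with m_i > 0 for all i ∈ I and m_i ≥ 0 for all i ∉ I. Then there exists i ∈ I such that (μ, α_i) > 0; consequently, for this i, the reflection s_{α_i}(μ) = μ − (2(μ,α_i)/(α_i,α_i))·α_i satisfies μ − s_{α_i}(μ) = c·α_i with c > 0. -/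
open scoped RealInnerProductSpace

/-- Let `α 1, …, α l` be linearly independent vectors in a real inner
product space `V` with `⟪α i, α j⟫ ≤ 0` for `i ≠ j`.  Let `I` be a nonempty subset of
indices and `μ = ∑_{i ∈ I} m i • α i − ∑_{i ∉ I} m i • α i` with rational `m i > 0` on `I`
and `m i ≥ 0` off `I`.  Then there is `i ∈ I` with `⟪μ, α i⟫ > 0`; consequently
`μ − s_{α i}(μ) = c • α i` with `c > 0`, where `s_{α i}(μ) = μ − (2⟪μ,α i⟫/⟪α i,α i⟫) • α i`. -/
theorem stmt0 {V : Type*} [NormedAddCommGroup V] [InnerProductSpace ℝ V]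
    (l : ℕ) (α : Fin l → V) (hindep : LinearIndependent ℝ α)
    (hobtuse : ∀ i j, i ≠ j → ⟪α i, α j⟫ ≤ 0)
    (I : Finset (Fin l)) (hI : I.Nonempty)
    (m : Fin l → ℚ) (hpos : ∀ i ∈ I, 0 < m i) (hnonneg : ∀ i ∉ I, 0 ≤ m i)
    (μ : V) (hμ : μ = (∑ i ∈ I, (m i : ℝ) • α i) - ∑ i ∈ Iᶜ, (m i : ℝ) • α i) :
    ∃ i ∈ I, 0 < ⟪μ, α i⟫ ∧
      ∃ c : ℝ, 0 < c ∧
        μ - (μ - (2 * ⟪μ, α i⟫ / ⟪α i, α i⟫) • α i) = c • α i := by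
  have key : ∃ i ∈ I, 0 < ⟪μ, α i⟫ := by
    by_contra! hcon
    set ν : V := ∑ i ∈ I, (m i : ℝ) • α i with hν
    set ρ : V := ∑ i ∈ Iᶜ, (m i : ℝ) • α i with hρ
    have h1 : ⟪μ, ν⟫ ≤ 0 := by
      rw [hν, inner_sum]
      refine Finset.sum_nonpos fun i hi => ?_
      rw [real_inner_smul_right]
      exact mul_nonpos_of_nonneg_of_nonpos (by exact_mod_cast (hpos i hi).le) (hcon i hi)
    have h2 : ⟪ρ, ν⟫ ≤ 0 := by
      rw [hν, hρ, inner_sum]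
      refine Finset.sum_nonpos fun i hi => ?_
      rw [sum_inner]
      refine Finset.sum_nonpos fun j hj => ?_
      have hj' : j ∉ I := Finset.mem_compl.mp hj
      rw [real_inner_smul_right, real_inner_smul_left]
      refine mul_nonpos_of_nonneg_of_nonpos (by exact_mod_cast (hpos i hi).le) ?_
      refine mul_nonpos_of_nonneg_of_nonpos (by exact_mod_cast hnonneg j hj') ?_
      exact hobtuse j i (fun h => hj' (h ▸ hi))
    have h3 : ν ≠ 0 := by
      intro h0
      obtain ⟨i, hi⟩ := hI
      have h4 := linearIndependent_iff'.mp hindep I (fun i => (m i : ℝ)) h0 i hi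
      have h5 := hpos i hi
      have h6 : m i = 0 := by exact_mod_cast h4
      exact h5.ne' h6
    have h4 : 0 < ⟪ν, ν⟫ := real_inner_self_pos.mpr h3
    rw [hμ, inner_sub_left] at h1
    linarith
  obtain ⟨i, hi, hip⟩ := key
  have hs : 0 < ⟪α i, α i⟫ := real_inner_self_pos.mpr (hindep.ne_zero i)
  exact ⟨i, hi, hip, _, div_pos (mul_pos two_pos hip) hs, sub_sub_cancel _ _⟩
end

section
/- Let ω be a minuscule weight, I = {α ∈ S : ⟨ω, α∨⟩ = 0} and W^I = {w ∈ W : w(α) > 0 for all α ∈ I}. Write ω = Σ_{i=1}^l m_i α_i. Then for any w ∈ W^I and any reduced expression w = s_{i_1}·s_{i_2}⋯s_{i_k}, the number of indices j ∈ {1,…,k} with i_j = i equals m_i minus the coefficient of α_i in w(ω); in particular, the number of times s_i appears in a reduced expression of w is independent of the chosen reduced expression. -/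
open scoped RealInnerProductSpace

/-- A finite reduced crystallographic root system `Φ` spanning a real inner product
space `V`, together with a fixed base of simple roots `α 0, …, α (l-1)`: every root is
a nonnegative or nonpositive integral combination of the simple roots.  The simple
reflections `s i` are given by the usual formula `s_α(λ) = λ − ⟨λ, α∨⟩ α`. -/
structure RootSystemWithBase (V : Type*) [NormedAddCommGroup V] [InnerProductSpace ℝ V] where
  l : ℕ
  Φ : Finset V
  α : Fin l → V
  s : Fin l → V ≃ₗ[ℝ] V
  α_mem : ∀ i, α i ∈ Φ
  root_ne_zero : ∀ β ∈ Φ, β ≠ (0 : V)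
  root_span : Submodule.span ℝ (Φ : Set V) = ⊤
  simple_indep : LinearIndependent ℝ α
  crystallographic : ∀ β ∈ Φ, ∀ γ ∈ Φ, ∃ z : ℤ, 2 * ⟪β, γ⟫ / ⟪γ, γ⟫ = (z : ℝ)
  reduced : ∀ β ∈ Φ, ∀ c : ℝ, c • β ∈ Φ → c = 1 ∨ c = -1
  base : ∀ β ∈ Φ,
    (∃ c : Fin l → ℤ, (∀ i, 0 ≤ c i) ∧ β = ∑ i, (c i : ℝ) • α i) ∨
    (∃ c : Fin l → ℤ, (∀ i, 0 ≤ c i) ∧ β = -(∑ i, (c i : ℝ) • α i))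
  s_apply : ∀ i v, s i v = v - (2 * ⟪v, α i⟫ / ⟪α i, α i⟫) • α i
  s_root : ∀ β ∈ Φ, ∀ i, s i β ∈ Φ

namespace RootSystemWithBase

variable {V : Type*} [NormedAddCommGroup V] [InnerProductSpace ℝ V]

/-- The pairing `⟨λ, β∨⟩ = 2(λ,β)/(β,β)`. -/
noncomputable def pairing (_D : RootSystemWithBase V) (lam β : V) : ℝ :=
  2 * ⟪lam, β⟫ / ⟪β, β⟫

/-- The Weyl group: the subgroup of `GL(V)` generated by the simple reflections. -/
def W (D : RootSystemWithBase V) : Subgroup (V ≃ₗ[ℝ] V) := Subgroup.closure (Set.range D.s)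

/-- The product `s_{i₁} · s_{i₂} ⋯ s_{i_k}` of simple reflections along a word. -/
def wordProd (D : RootSystemWithBase V) (L : List (Fin D.l)) : V ≃ₗ[ℝ] V := (L.map D.s).prod

/-- The length `ℓ(w)`: the least `k` such that `w` is a product of `k` simple
reflections. -/
noncomputable def len (D : RootSystemWithBase V) (w : V ≃ₗ[ℝ] V) : ℕ :=
  sInf {k | ∃ L : List (Fin D.l), L.length = k ∧ D.wordProd L = w}

/-- `v` is a linear combination of the simple roots with all coefficients `≥ 0`. -/
def IsNonnegComb (D : RootSystemWithBase V) (v : V) : Prop :=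
  ∃ c : Fin D.l → ℝ, (∀ i, 0 ≤ c i) ∧ v = ∑ i, c i • D.α i

/-- `v > 0`: a nonzero nonnegative combination of the simple roots. -/
def IsPos (D : RootSystemWithBase V) (v : V) : Prop := D.IsNonnegComb v ∧ v ≠ 0

/-- `x ≤ y` for vectors: `y − x` is a nonnegative combination of the simple roots. -/
def vle (D : RootSystemWithBase V) (x y : V) : Prop := D.IsNonnegComb (y - x)

/-- `λ` is dominant: `⟨λ, αᵢ∨⟩ ≥ 0` for all `i`. -/
def IsDominant (D : RootSystemWithBase V) (lam : V) : Prop :=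
  ∀ i, 0 ≤ D.pairing lam (D.α i)

/-- `ω` is minuscule: dominant with `⟨ω, β∨⟩ ∈ {−1, 0, 1}` for every root `β`. -/
def IsMinuscule (D : RootSystemWithBase V) (ω : V) : Prop :=
  D.IsDominant ω ∧ ∀ β ∈ D.Φ, D.pairing ω β = -1 ∨ D.pairing ω β = 0 ∨ D.pairing ω β = 1

/-- `W^I = {w ∈ W : w(α) > 0 for all α ∈ I}` where `I = {α ∈ S : ⟨ω, α∨⟩ = 0}`. -/
def WI (D : RootSystemWithBase V) (ω : V) : Set (V ≃ₗ[ℝ] V) :=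
  {w | w ∈ D.W ∧ ∀ i, D.pairing ω (D.α i) = 0 → D.IsPos (w (D.α i))}

/-- `w ≤ τ` in `W`:  `ℓ(τ) = ℓ(w) + ℓ(τ w⁻¹)`. -/
def wle (D : RootSystemWithBase V) (w τ : V ≃ₗ[ℝ] V) : Prop :=
  D.len τ = D.len w + D.len (τ * w⁻¹)

end RootSystemWithBase

namespace RootSystemWithBase

section aux

variable {V : Type*} [NormedAddCommGroup V] [InnerProductSpace ℝ V] (D : RootSystemWithBase V)

lemma aux_ne (i : Fin D.l) : (⟪D.α i, D.α i⟫ : ℝ) ≠ 0 :=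
  inner_self_ne_zero.mpr (D.root_ne_zero _ (D.α_mem i))

lemma aux_inner (i : Fin D.l) (u v : V) : (⟪D.s i u, D.s i v⟫ : ℝ) = ⟪u, v⟫ := by
  have h := D.aux_ne i
  rw [D.s_apply, D.s_apply]
  simp only [inner_sub_left, inner_sub_right, real_inner_smul_left, real_inner_smul_right]
  rw [real_inner_comm v (D.α i)]
  field_simp
  ring

lemma aux_s_self (i : Fin D.l) : D.s i (D.α i) = - D.α i := by
  have h := D.aux_ne i
  rw [D.s_apply, mul_div_assoc, div_self h]
  module

lemma aux_sq (i : Fin D.l) : D.s i * D.s i = 1 := by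
  have h := D.aux_ne i
  ext v
  change D.s i (D.s i v) = v
  conv_lhs => arg 2; rw [D.s_apply]
  rw [map_sub, map_smul, aux_s_self, D.s_apply]
  module

lemma aux_word_cons (j : Fin D.l) (L : List (Fin D.l)) :
    D.wordProd (j :: L) = D.s j * D.wordProd L := by
  simp [wordProd]

lemma aux_word_append (L M : List (Fin D.l)) :
    D.wordProd (L ++ M) = D.wordProd L * D.wordProd M := by
  simp [wordProd]

lemma aux_word_single (j : Fin D.l) : D.wordProd [j] = D.s j := by
  simp [wordProd]

lemma aux_word_inner (L : List (Fin D.l)) (u v : V) :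
    (⟪D.wordProd L u, D.wordProd L v⟫ : ℝ) = ⟪u, v⟫ := by
  induction L with
  | nil => simp [wordProd]
  | cons j L ih =>
    rw [aux_word_cons]
    exact (D.aux_inner j _ _).trans ih

lemma aux_word_root (L : List (Fin D.l)) (β : V) (hβ : β ∈ D.Φ) : D.wordProd L β ∈ D.Φ := by
  induction L with
  | nil => simpa [wordProd] using hβ
  | cons j L ih =>
    rw [aux_word_cons]
    exact D.s_root _ ih j

lemma aux_word_reverse (L : List (Fin D.l)) : D.wordProd L * D.wordProd L.reverse = 1 := by
  induction L with
  | nil => simp [wordProd]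
  | cons j L ih =>
    rw [List.reverse_cons, aux_word_cons, aux_word_append, aux_word_single]
    calc D.s j * D.wordProd L * (D.wordProd L.reverse * D.s j)
        = D.s j * (D.wordProd L * D.wordProd L.reverse) * D.s j := by group
      _ = 1 := by rw [ih, mul_one, aux_sq]

lemma aux_perm (β : V) (hβ : β ∈ D.Φ) (hp : D.IsNonnegComb β) (j : Fin D.l)
    (hn : ¬ D.IsNonnegComb (D.s j β)) : β = D.α j := by
  obtain ⟨c, hc, hcβ⟩ := hp
  rcases D.base _ (D.s_root β hβ j) with ⟨d, hd, hdβ⟩ | ⟨d, hd, hdβ⟩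
  · exact absurd ⟨fun i => (d i : ℝ), fun i => Int.cast_nonneg (hd i), hdβ⟩ hn
  · have hz : ∀ i, i ≠ j → c i = 0 := by
      intro i hij
      rw [D.s_apply] at hdβ
      set p := 2 * ⟪β, D.α j⟫ / ⟪D.α j, D.α j⟫ with hpdef
      have h0 : ∑ i, (c i + d i - if i = j then p else 0) • D.α i = 0 := by
        simp only [sub_smul, add_smul, Finset.sum_sub_distrib, Finset.sum_add_distrib, ite_smul,
          zero_smul, Finset.sum_ite_eq', Finset.mem_univ, if_true]
        rw [← hcβ, add_sub_right_comm, hdβ]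
        simp
      have := (Fintype.linearIndependent_iff.mp D.simple_indep) _ h0 i
      simp only [hij, if_false, sub_zero] at this
      have h1 := hc i
      have h2 : (0 : ℝ) ≤ d i := by exact_mod_cast hd i
      linarith
    have hb : β = c j • D.α j := by
      rw [hcβ]
      exact Finset.sum_eq_single j (fun i _ hij => by rw [hz i hij, zero_smul]) (by simp)
    rcases D.reduced (D.α j) (D.α_mem j) (c j) (hb ▸ hβ) with h | h
    · rw [hb, h, one_smul]
    · have := hc j
      linarith

lemma aux_conj (B : List (Fin D.l)) (i j : Fin D.l) (h : D.wordProd B (D.α i) = D.α j) :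
    D.s j * D.wordProd B = D.wordProd B * D.s i := by
  ext v
  change D.s j (D.wordProd B v) = D.wordProd B (D.s i v)
  rw [D.s_apply, D.s_apply, map_sub, map_smul, h, ← h, aux_word_inner, aux_word_inner]

lemma aux_alpha_nonneg (i : Fin D.l) : D.IsNonnegComb (D.α i) :=
  ⟨fun k => if k = i then 1 else 0, fun k => by dsimp only; split_ifs <;> norm_num, by simp⟩

lemma aux_exchange (L : List (Fin D.l)) (i : Fin D.l)
    (h : ¬ D.IsNonnegComb (D.wordProd L (D.α i))) :
    ∃ M : List (Fin D.l), M.length + 1 = L.length ∧ D.wordProd (L ++ [i]) = D.wordProd M := by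
  induction L with
  | nil => exact absurd (by simpa [wordProd] using D.aux_alpha_nonneg i) h
  | cons j B ih =>
    by_cases hB : D.IsNonnegComb (D.wordProd B (D.α i))
    · rw [aux_word_cons] at h
      have e := D.aux_perm _ (D.aux_word_root B _ (D.α_mem i)) hB j h
      refine ⟨B, rfl, ?_⟩
      rw [aux_word_append, aux_word_cons, D.aux_conj B i j e, aux_word_single, mul_assoc, aux_sq,
        mul_one]
    · obtain ⟨M, hM, hM2⟩ := ih hB
      refine ⟨j :: M, by simp [hM], ?_⟩
      rw [List.cons_append, aux_word_cons, hM2, aux_word_cons]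

lemma aux_nonneg_neg (v : V) (h1 : D.IsNonnegComb v) (h2 : D.IsNonnegComb (-v)) : v = 0 := by
  obtain ⟨c, hc, hcv⟩ := h1
  obtain ⟨d, hd, hdv⟩ := h2
  have h0 : ∑ i, (c i + d i) • D.α i = 0 := by
    simp only [add_smul, Finset.sum_add_distrib]
    rw [← hcv, ← hdv, add_neg_cancel]
  have h := (Fintype.linearIndependent_iff.mp D.simple_indep) _ h0
  rw [hcv]
  refine Finset.sum_eq_zero fun i _ => ?_
  have : c i = 0 := by linarith [hc i, hd i, h i]
  rw [this, zero_smul]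

lemma aux_nonneg_sum (c : Fin D.l → ℝ) (f : Fin D.l → V)
    (h : ∀ i, c i = 0 ∨ (0 ≤ c i ∧ D.IsNonnegComb (f i))) :
    D.IsNonnegComb (∑ i, c i • f i) := by
  have : ∀ i, ∃ d : Fin D.l → ℝ, (∀ k, 0 ≤ d k) ∧ c i • f i = ∑ k, d k • D.α k := by
    intro i
    rcases h i with h | ⟨h, d, hd, e⟩
    · exact ⟨0, fun _ => le_rfl, by simp [h]⟩
    · exact ⟨fun k => c i * d k, fun k => mul_nonneg h (hd k), by
        rw [e, Finset.smul_sum]; simp [mul_smul]⟩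
  choose d hd e using this
  refine ⟨fun k => ∑ i, d i k, fun k => Finset.sum_nonneg fun i _ => hd i k, ?_⟩
  simp only [e, Finset.sum_smul]
  exact Finset.sum_comm

lemma aux_main (ω : V) (hω : D.IsMinuscule ω) (w : V ≃ₗ[ℝ] V) (hw : w ∈ D.WI ω)
    (L : List (Fin D.l)) (hL : D.wordProd L = w)
    (hred : ∀ M : List (Fin D.l), D.wordProd M = w → L.length ≤ M.length)
    (B : List (Fin D.l)) : ∀ A : List (Fin D.l), A ++ B = L →
      D.wordProd B ω = ω - ∑ i, (B.count i : ℝ) • D.α i := by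
  induction B with
  | nil => intro A _; simp [wordProd]
  | cons j B ih =>
    intro A hA
    have ihB := ih (A ++ [j]) (by simpa using hA)
    have hlen : A.length + (B.length + 1) = L.length := by rw [← hA]; simp
    have hinv := D.aux_word_reverse B
    set γ := D.wordProd B.reverse (D.α j) with hγ
    have hγΦ : γ ∈ D.Φ := D.aux_word_root _ _ (D.α_mem j)
    have hBγ : D.wordProd B γ = D.α j := by
      change (D.wordProd B * D.wordProd B.reverse) (D.α j) = _
      rw [hinv]; rfl
    have hγp : D.IsNonnegComb γ := by
      by_contra hcon
      obtain ⟨M, hM, hM2⟩ := D.aux_exchange _ _ hcon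
      have h1 := D.aux_word_reverse (j :: B)
      rw [List.reverse_cons, hM2] at h1
      have h2 := D.aux_word_reverse M.reverse
      rw [List.reverse_reverse] at h2
      have h3 : D.wordProd (j :: B) = D.wordProd M.reverse :=
        (eq_inv_of_mul_eq_one_left h1).trans (eq_inv_of_mul_eq_one_left h2).symm
      have := hred (A ++ M.reverse) (by
        rw [aux_word_append, ← h3, ← aux_word_append, hA, hL])
      simp at this hM
      omega
    have hAp : D.IsNonnegComb (D.wordProd A (D.α j)) := by
      by_contra hcon
      obtain ⟨M, hM, hM2⟩ := D.aux_exchange _ _ hcon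
      have := hred (M ++ B) (by
        rw [aux_word_append, ← hM2, ← aux_word_append, ← hL, ← hA]; simp)
      simp at this
      omega
    have hwγ : w γ = - D.wordProd A (D.α j) := by
      rw [← hL, ← hA, aux_word_append, aux_word_cons]
      change D.wordProd A (D.s j (D.wordProd B γ)) = _
      rw [hBγ, aux_s_self, map_neg]
    have hpair : 2 * ⟪D.wordProd B ω, D.α j⟫ / ⟪D.α j, D.α j⟫ = D.pairing ω γ := by
      rw [← hBγ, aux_word_inner, aux_word_inner]; rfl
    obtain ⟨c, hc, hcγ⟩ := hγp
    have hdom : ∀ i, (0 : ℝ) ≤ ⟪ω, D.α i⟫ := by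
      intro i
      have h := hω.1 i
      unfold pairing at h
      have hpos : (0 : ℝ) < ⟪D.α i, D.α i⟫ :=
        lt_of_le_of_ne real_inner_self_nonneg (D.aux_ne i).symm
      rw [le_div_iff₀ hpos] at h
      linarith
    have hin : (⟪ω, γ⟫ : ℝ) = ∑ i, c i * ⟪ω, D.α i⟫ := by
      rw [hcγ, inner_sum]; simp [real_inner_smul_right]
    have hin0 : (0 : ℝ) ≤ ⟪ω, γ⟫ := by
      rw [hin]; exact Finset.sum_nonneg fun i _ => mul_nonneg (hc i) (hdom i)
    have hγ0 := D.root_ne_zero γ hγΦ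
    have hγγ : (⟪γ, γ⟫ : ℝ) ≠ 0 := inner_self_ne_zero.mpr hγ0
    have hone : D.pairing ω γ = 1 := by
      rcases hω.2 γ hγΦ with h | h | h
      · have : 0 ≤ D.pairing ω γ :=
          div_nonneg (by linarith) real_inner_self_nonneg
        linarith
      · exfalso
        have hz : (⟪ω, γ⟫ : ℝ) = 0 := by
          unfold pairing at h
          rcases div_eq_zero_iff.mp h with h | h
          · linarith
          · exact absurd h hγγ
        rw [hin, Finset.sum_eq_zero_iff_of_nonneg
          (fun i _ => mul_nonneg (hc i) (hdom i))] at hz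
        have hwp : D.IsNonnegComb (w γ) := by
          rw [hcγ, map_sum]
          simp only [map_smul]
          refine D.aux_nonneg_sum c _ fun i => ?_
          rcases mul_eq_zero.mp (hz i (Finset.mem_univ i)) with h | h
          · exact Or.inl h
          · exact Or.inr ⟨hc i, (hw.2 i (by simp [pairing, h])).1⟩
        have := D.aux_nonneg_neg (w γ) hwp (by rw [hwγ, neg_neg]; exact hAp)
        exact hγ0 (by simpa using this)
      · exact h
    rw [aux_word_cons]
    change D.s j (D.wordProd B ω) = _
    rw [D.s_apply, hpair, hone, one_smul, ihB]
    simp only [List.count_cons, Nat.cast_add, add_smul, Finset.sum_add_distrib]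
    simp [sub_sub]

end aux

end RootSystemWithBase

/-- Let `ω` be a minuscule weight and write `ω = ∑ m i • α i`.  For any
`w ∈ W^I` and any reduced expression `w = s_{i₁} ⋯ s_{i_k}`, the number of indices `j`
with `i_j = i` equals `m i` minus the coefficient of `α i` in `w(ω)`; in particular it is
independent of the chosen reduced expression. -/
theorem stmt2 {V : Type*} [NormedAddCommGroup V] [InnerProductSpace ℝ V]
    (D : RootSystemWithBase V) (ω : V) (hω : D.IsMinuscule ω)
    (m : Fin D.l → ℝ) (hm : ω = ∑ i, m i • D.α i)
    (w : V ≃ₗ[ℝ] V) (hw : w ∈ D.WI ω)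
    (L : List (Fin D.l)) (hL : D.wordProd L = w) (hred : L.length = D.len w)
    (c : Fin D.l → ℝ) (hc : w ω = ∑ i, c i • D.α i) (i : Fin D.l) :
    (L.count i : ℝ) = m i - c i := by
  have hmain := D.aux_main ω hω w hw L hL
    (fun M hM => hred.trans_le (Nat.sInf_le ⟨M, rfl, hM⟩)) L [] rfl
  rw [hL, hc] at hmain
  have h0 : ∑ k, (c k - m k + (L.count k : ℝ)) • D.α k = 0 := by
    simp only [add_smul, sub_smul, Finset.sum_add_distrib, Finset.sum_sub_distrib]
    rw [hmain, ← hm]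
    abel
  have := (Fintype.linearIndependent_iff.mp D.simple_indep) _ h0 i
  linarith
end

section
/- Let ω be a minuscule weight, I = {α ∈ S : ⟨ω, α∨⟩ = 0} and W^I = {w ∈ W : w(α) > 0 for all α ∈ I}. Let w ∈ W^I and let w = s_{i_1}·s_{i_2}⋯s_{i_k} be a reduced expression. Then w(ω) = ω − Σ_{j=1}^k α_{i_j}, and ℓ(w) = ht(ω − w(ω)). -/
open scoped RealInnerProductSpace

namespace RootSystemWithBase

section Helpers

variable {V : Type*} [NormedAddCommGroup V] [InnerProductSpace ℝ V]

lemma h_inner_pos (D : RootSystemWithBase V) (i : Fin D.l) : 0 < ⟪D.α i, D.α i⟫ :=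
  real_inner_self_pos.2 (D.root_ne_zero _ (D.α_mem i))

lemma h_s_inner (D : RootSystemWithBase V) (i : Fin D.l) (x y : V) :
    ⟪D.s i x, D.s i y⟫ = ⟪x, y⟫ := by
  have h := (D.h_inner_pos i).ne'
  rw [D.s_apply, D.s_apply]
  simp only [inner_sub_left, inner_sub_right, real_inner_smul_left, real_inner_smul_right]
  rw [real_inner_comm y (D.α i)]
  field_simp
  ring

lemma h_s_self (D : RootSystemWithBase V) (i : Fin D.l) : D.s i (D.α i) = -D.α i := by
  have h := (D.h_inner_pos i).ne'
  rw [D.s_apply, mul_div_assoc, div_self h]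
  module

lemma h_s_s (D : RootSystemWithBase V) (i : Fin D.l) : D.s i * D.s i = 1 := by
  have h := (D.h_inner_pos i).ne'
  ext x
  change D.s i (D.s i x) = x
  rw [D.s_apply i x, map_sub, map_smul, D.h_s_self, D.s_apply i x]
  module

lemma h_wp_nil (D : RootSystemWithBase V) : D.wordProd [] = 1 := rfl

lemma h_wp_cons (D : RootSystemWithBase V) (i : Fin D.l) (L : List (Fin D.l)) :
    D.wordProd (i :: L) = D.s i * D.wordProd L := by simp [wordProd]

lemma h_wp_append (D : RootSystemWithBase V) (L M : List (Fin D.l)) :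
    D.wordProd (L ++ M) = D.wordProd L * D.wordProd M := by simp [wordProd]

lemma h_wp_reverse (D : RootSystemWithBase V) (L : List (Fin D.l)) :
    D.wordProd L.reverse = (D.wordProd L)⁻¹ := by
  induction L with
  | nil => simp [h_wp_nil]
  | cons i L ih =>
    rw [List.reverse_cons, h_wp_append, ih, h_wp_cons, h_wp_cons, h_wp_nil, mul_inv_rev, mul_one,
      inv_eq_of_mul_eq_one_left (D.h_s_s i)]

lemma h_wp_inner (D : RootSystemWithBase V) (L : List (Fin D.l)) (x y : V) :
    ⟪D.wordProd L x, D.wordProd L y⟫ = ⟪x, y⟫ := by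
  induction L with
  | nil => rfl
  | cons i L ih =>
    rw [h_wp_cons]
    exact (D.h_s_inner i _ _).trans ih

lemma h_wp_root (D : RootSystemWithBase V) (L : List (Fin D.l)) {x : V} (hx : x ∈ D.Φ) :
    D.wordProd L x ∈ D.Φ := by
  induction L with
  | nil => exact hx
  | cons i L ih =>
    rw [h_wp_cons]
    exact D.s_root _ ih i

lemma h_coeff (D : RootSystemWithBase V) {c d : Fin D.l → ℝ}
    (h : ∑ i, c i • D.α i = ∑ i, d i • D.α i) : c = d := by
  have h2 : ∑ i, (c i - d i) • D.α i = 0 := by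
    simp only [sub_smul, Finset.sum_sub_distrib, h, sub_self]
  have := Fintype.linearIndependent_iff.1 D.simple_indep _ h2
  funext i
  linarith [this i]

lemma h_alpha (D : RootSystemWithBase V) (m : Fin D.l) (p : ℝ) :
    ∑ i, (if i = m then p else 0) • D.α i = p • D.α m := by
  simp [ite_smul]

lemma h_perm (D : RootSystemWithBase V) (m : Fin D.l) {β : V} (hβ : β ∈ D.Φ)
    (hn : D.IsNonnegComb β) (hne : β ≠ D.α m) : D.IsNonnegComb (D.s m β) := by
  obtain ⟨c, hc, e⟩ := hn
  rcases D.base _ (D.s_root β hβ m) with ⟨d, hd, e2⟩ | ⟨d, hd, e2⟩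
  · exact ⟨fun i => d i, fun i => Int.cast_nonneg (hd i), e2⟩
  · exfalso
    rw [D.s_apply] at e2
    set p := 2 * ⟪β, D.α m⟫ / ⟪D.α m, D.α m⟫
    have h3 : ∑ i, (c i + d i) • D.α i = ∑ i, (if i = m then p else 0) • D.α i := by
      rw [h_alpha]
      simp only [add_smul, Finset.sum_add_distrib]
      rw [← e, ← sub_eq_zero, add_sub_right_comm, e2]
      abel
    have h4 := D.h_coeff h3
    have h5 : β = c m • D.α m := by
      rw [e, Finset.sum_eq_single m]
      · intro b _ hb
        have := congrFun h4 b
        simp only [hb, if_false] at this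
        have h6 : (0 : ℝ) ≤ d b := by exact_mod_cast hd b
        have : c b = 0 := by linarith [hc b]
        rw [this, zero_smul]
      · simp
    rcases D.reduced _ (D.α_mem m) (c m) (h5 ▸ hβ) with h | h
    · exact hne (by rw [h5, h, one_smul])
    · linarith [hc m]

lemma h_nonneg_alpha (D : RootSystemWithBase V) (m : Fin D.l) : D.IsNonnegComb (D.α m) :=
  ⟨fun i => if i = m then 1 else 0, fun i => by dsimp only; split_ifs <;> norm_num, by
    rw [D.h_alpha, one_smul]⟩

lemma h_exch (D : RootSystemWithBase V) (i : Fin D.l) (M : List (Fin D.l)) :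
    D.IsNonnegComb (D.wordProd M (D.α i)) ∨
      ∃ N : List (Fin D.l), N.length < M.length ∧ D.wordProd N = D.wordProd M * D.s i := by
  induction M with
  | nil => exact Or.inl (D.h_nonneg_alpha i)
  | cons m M ih =>
    rcases ih with h | ⟨N, hN, e⟩
    · by_cases hm : D.wordProd M (D.α i) = D.α m
      · right
        refine ⟨M, by simp, ?_⟩
        have key : D.s m * D.wordProd M = D.wordProd M * D.s i := by
          ext x
          change D.s m (D.wordProd M x) = D.wordProd M (D.s i x)
          rw [D.s_apply, D.s_apply, ← hm, h_wp_inner, h_wp_inner, map_sub, map_smul]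
        rw [h_wp_cons, key, mul_assoc, h_s_s, mul_one]
      · left
        rw [h_wp_cons]
        exact D.h_perm m (D.h_wp_root M (D.α_mem i)) h hm
    · right
      exact ⟨m :: N, by simpa using hN, by rw [h_wp_cons, h_wp_cons, e, mul_assoc]⟩

lemma h_nonneg_antisymm (D : RootSystemWithBase V) {v : V} (h1 : D.IsNonnegComb v)
    (h2 : D.IsNonnegComb (-v)) : v = 0 := by
  obtain ⟨c, hc, e⟩ := h1
  obtain ⟨d, hd, e2⟩ := h2
  have : ∑ i, (c i + d i) • D.α i = ∑ i, (0 : ℝ) • D.α i := by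
    simp only [add_smul, Finset.sum_add_distrib, zero_smul, Finset.sum_const_zero]
    rw [← e, ← e2, add_neg_cancel]
  have h := D.h_coeff this
  rw [e]
  refine Finset.sum_eq_zero fun i _ => ?_
  have h3 := congrFun h i
  have : c i = 0 := by linarith [hc i, hd i]
  rw [this, zero_smul]

lemma h_nonneg_sum (D : RootSystemWithBase V) (f : Fin D.l → V)
    (h : ∀ i, D.IsNonnegComb (f i)) : D.IsNonnegComb (∑ i, f i) := by
  choose c hc e using h
  refine ⟨fun j => ∑ i, c i j, fun j => Finset.sum_nonneg fun i _ => hc i j, ?_⟩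
  simp only [Finset.sum_smul]
  rw [Finset.sum_comm]
  exact Finset.sum_congr rfl fun i _ => e i

lemma h_nonneg_smul (D : RootSystemWithBase V) {v : V} {a : ℝ} (ha : 0 ≤ a)
    (h : D.IsNonnegComb v) : D.IsNonnegComb (a • v) := by
  obtain ⟨c, hc, e⟩ := h
  exact ⟨fun i => a * c i, fun i => mul_nonneg ha (hc i), by
    rw [e, Finset.smul_sum]; simp only [mul_smul]⟩

lemma h_len_le (D : RootSystemWithBase V) (N : List (Fin D.l)) :
    D.len (D.wordProd N) ≤ N.length := Nat.sInf_le ⟨N, rfl, rfl⟩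

lemma h_dom (D : RootSystemWithBase V) {ω : V} (h : D.IsDominant ω) (i : Fin D.l) :
    0 ≤ ⟪ω, D.α i⟫ := by
  have h1 := h i
  have h2 := D.h_inner_pos i
  unfold pairing at h1
  by_contra! hlt
  have : 2 * ⟪ω, D.α i⟫ / ⟪D.α i, D.α i⟫ < 0 := div_neg_of_neg_of_pos (by linarith) h2
  linarith

/-- The key step: the pairing along a reduced word is always one. -/
lemma h_step (D : RootSystemWithBase V) {ω : V} (hω : D.IsMinuscule ω)
    (P Q : List (Fin D.l)) (i : Fin D.l)
    (hw : ∀ j, D.pairing ω (D.α j) = 0 → D.IsPos (D.wordProd (P ++ i :: Q) (D.α j)))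
    (hred : (P ++ i :: Q).length = D.len (D.wordProd (P ++ i :: Q))) :
    2 * ⟪D.wordProd Q ω, D.α i⟫ / ⟪D.α i, D.α i⟫ = 1 := by
  have hP : D.IsNonnegComb (D.wordProd P (D.α i)) := by
    rcases D.h_exch i P with h | ⟨N, hN, e⟩
    · exact h
    · exfalso
      have := D.h_len_le (N ++ Q)
      rw [h_wp_append, e, mul_assoc, ← h_wp_cons, ← h_wp_append, ← hred] at this
      simp at this
      omega
  have hQ : D.IsNonnegComb (D.wordProd Q.reverse (D.α i)) := by
    rcases D.h_exch i Q.reverse with h | ⟨N, hN, e⟩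
    · exact h
    · exfalso
      have := D.h_len_le (P ++ N.reverse)
      rw [h_wp_append, h_wp_reverse, e, h_wp_reverse, mul_inv_rev, inv_inv,
        inv_eq_of_mul_eq_one_left (D.h_s_s i), ← h_wp_cons, ← h_wp_append, ← hred] at this
      simp at this hN
      omega
  set γ := D.wordProd Q.reverse (D.α i) with hγ
  have hγΦ : γ ∈ D.Φ := D.h_wp_root _ (D.α_mem i)
  have hQγ : D.wordProd Q γ = D.α i := by
    rw [hγ, h_wp_reverse]
    change (D.wordProd Q * (D.wordProd Q)⁻¹) (D.α i) = D.α i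
    rw [mul_inv_cancel]; rfl
  have hpair : 2 * ⟪D.wordProd Q ω, D.α i⟫ / ⟪D.α i, D.α i⟫ = D.pairing ω γ := by
    rw [← hQγ, h_wp_inner, h_wp_inner]; rfl
  rw [hpair]
  obtain ⟨c, hc, e⟩ := hQ
  have hin : ⟪ω, γ⟫ = ∑ j, c j * ⟪ω, D.α j⟫ := by
    rw [e, inner_sum]; simp only [real_inner_smul_right]
  have hterm : ∀ j, 0 ≤ c j * ⟪ω, D.α j⟫ := fun j => mul_nonneg (hc j) (D.h_dom hω.1 j)
  have hγpos : 0 < ⟪γ, γ⟫ := real_inner_self_pos.2 (D.root_ne_zero _ hγΦ)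
  have hnn : 0 ≤ ⟪ω, γ⟫ := by rw [hin]; exact Finset.sum_nonneg fun j _ => hterm j
  rcases hω.2 γ hγΦ with h | h | h
  · exfalso
    have : 0 ≤ D.pairing ω γ := by unfold pairing; positivity
    linarith
  · exfalso
    have h0 : ⟪ω, γ⟫ = 0 := by
      unfold pairing at h
      rcases div_eq_zero_iff.1 h with h | h
      · linarith
      · exact absurd h hγpos.ne'
    rw [hin, Finset.sum_eq_zero_iff_of_nonneg fun j _ => hterm j] at h0
    have hpos : D.IsNonnegComb (D.wordProd (P ++ i :: Q) γ) := by
      rw [e, map_sum]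
      refine D.h_nonneg_sum _ fun j => ?_
      rw [map_smul]
      rcases mul_eq_zero.1 (h0 j (Finset.mem_univ j)) with h | h
      · rw [h, zero_smul]
        exact ⟨0, fun _ => le_rfl, by simp⟩
      · exact D.h_nonneg_smul (hc j) (hw j (by unfold pairing; rw [h]; simp)).1
    have hneg : D.wordProd (P ++ i :: Q) γ = -D.wordProd P (D.α i) := by
      rw [h_wp_append, h_wp_cons]
      change D.wordProd P (D.s i (D.wordProd Q γ)) = _
      rw [hQγ, h_s_self, map_neg]
    rw [hneg] at hpos
    exact D.root_ne_zero _ (D.h_wp_root P (D.α_mem i)) (D.h_nonneg_antisymm hP hpos)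
  · exact h

lemma h_main (D : RootSystemWithBase V) {ω : V} (hω : D.IsMinuscule ω) (L : List (Fin D.l))
    (hw : ∀ j, D.pairing ω (D.α j) = 0 → D.IsPos (D.wordProd L (D.α j)))
    (hred : L.length = D.len (D.wordProd L)) (Q : List (Fin D.l)) :
    ∀ P, P ++ Q = L → D.wordProd Q ω = ω - (Q.map D.α).sum := by
  induction Q with
  | nil => intro P _; simp [h_wp_nil]
  | cons i Q ih =>
    intro P hP
    have h1 := ih (P ++ [i]) (by simpa using hP)
    have h2 := D.h_step hω P Q i (by rw [hP]; exact hw) (by rw [hP]; exact hred)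
    rw [h_wp_cons]
    change D.s i (D.wordProd Q ω) = _
    rw [D.s_apply, h2, h1, one_smul, List.map_cons, List.sum_cons]
    abel

lemma h_count (D : RootSystemWithBase V) (L : List (Fin D.l)) :
    ∃ c : Fin D.l → ℝ, (L.map D.α).sum = ∑ i, c i • D.α i ∧ (L.length : ℝ) = ∑ i, c i := by
  induction L with
  | nil => exact ⟨0, by simp, by simp⟩
  | cons m L ih =>
    obtain ⟨c, h1, h2⟩ := ih
    refine ⟨fun i => (if i = m then 1 else 0) + c i, ?_, ?_⟩
    · simp only [add_smul, Finset.sum_add_distrib]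
      rw [h_alpha, one_smul, List.map_cons, List.sum_cons, h1]
    · rw [Finset.sum_add_distrib, ← h2]
      simp [add_comm]

end Helpers

end RootSystemWithBase

/-- Let `ω` be a minuscule weight, `w ∈ W^I` and
`w = s_{i₁} · s_{i₂} ⋯ s_{i_k}` a reduced expression.  Then
`w(ω) = ω − ∑_{j=1}^k α_{i_j}`, and `ℓ(w) = ht(ω − w(ω))`. -/
theorem stmt3 {V : Type*} [NormedAddCommGroup V] [InnerProductSpace ℝ V]
    (D : RootSystemWithBase V) (ω : V) (hω : D.IsMinuscule ω)
    (w : V ≃ₗ[ℝ] V) (hw : w ∈ D.WI ω)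
    (L : List (Fin D.l)) (hL : D.wordProd L = w) (hred : L.length = D.len w) :
    w ω = ω - (L.map D.α).sum ∧
      ∀ c : Fin D.l → ℝ, ω - w ω = ∑ i, c i • D.α i → (D.len w : ℝ) = ∑ i, c i := by
  subst hL
  have h := D.h_main hω L hw.2 hred L [] rfl
  refine ⟨h, fun c hc => ?_⟩
  obtain ⟨d, h1, h2⟩ := D.h_count L
  rw [h, sub_sub_cancel, h1] at hc
  rw [← D.h_coeff hc, ← hred, h2]
end

section
/- Let ω be a minuscule weight, I = {α ∈ S : ⟨ω, α∨⟩ = 0} and W^I = {w ∈ W : w(α) > 0 for all α ∈ I}. Let w = s_{i_1}·s_{i_2}⋯s_{i_k} be any product of simple reflections (not assumed reduced) such that ht(ω − s_{i_1}·s_{i_2}⋯s_{i_k}(ω)) = k. Then w ∈ W^I and ℓ(w) = k. -/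
open scoped RealInnerProductSpace

namespace RootSystemWithBase

variable {V : Type*} [NormedAddCommGroup V] [InnerProductSpace ℝ V]

/-- A linear functional with prescribed values on the simple roots. -/
theorem exists_functional (D : RootSystemWithBase V) (f : Fin D.l → ℝ) :
    ∃ h : V →ₗ[ℝ] ℝ, ∀ i, h (D.α i) = f i := by
  let b := Module.Basis.span D.simple_indep
  obtain ⟨h, hh⟩ := LinearMap.exists_extend (b.constr ℝ f)
  refine ⟨h, fun i => ?_⟩
  have h1 := LinearMap.congr_fun hh (b i)
  rw [Module.Basis.constr_basis] at h1
  rw [← h1]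
  simp [b, Module.Basis.span_apply]

theorem inner_self_ne (D : RootSystemWithBase V) (i : Fin D.l) :
    ⟪D.α i, D.α i⟫ ≠ 0 := by
  rw [inner_self_ne_zero]
  exact D.root_ne_zero _ (D.α_mem i)

theorem inner_s_left (D : RootSystemWithBase V) (i : Fin D.l) (v u : V) :
    ⟪D.s i v, u⟫ = ⟪v, D.s i u⟫ := by
  rw [D.s_apply, D.s_apply, inner_sub_left, inner_sub_right, inner_smul_left, inner_smul_right,
    real_inner_comm u (D.α i)]
  simp only [conj_trivial]
  ring

theorem s_s (D : RootSystemWithBase V) (i : Fin D.l) (v : V) : D.s i (D.s i v) = v := by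
  have h := D.inner_self_ne i
  rw [D.s_apply i (D.s i v), D.s_apply i v, inner_sub_left, inner_smul_left]
  simp only [conj_trivial]
  rw [sub_sub, ← add_smul]
  have : 2 * ⟪v, D.α i⟫ / ⟪D.α i, D.α i⟫ +
      2 * (⟪v, D.α i⟫ - 2 * ⟪v, D.α i⟫ / ⟪D.α i, D.α i⟫ * ⟪D.α i, D.α i⟫) /
        ⟪D.α i, D.α i⟫ = 0 := by
    field_simp
    ring
  rw [this, zero_smul, sub_zero]

theorem wordProd_cons (D : RootSystemWithBase V) (j : Fin D.l) (L : List (Fin D.l)) (v : V) :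
    D.wordProd (j :: L) v = D.s j (D.wordProd L v) := by
  simp [wordProd]

theorem wordProd_nil (D : RootSystemWithBase V) (v : V) :
    D.wordProd [] v = v := by
  simp [wordProd]

theorem inner_word (D : RootSystemWithBase V) (L : List (Fin D.l)) (v u : V) :
    ⟪D.wordProd L v, D.wordProd L u⟫ = ⟪v, u⟫ := by
  induction L with
  | nil => simp [wordProd_nil]
  | cons j L ih => rw [wordProd_cons, wordProd_cons, inner_s_left, s_s, ih]

theorem word_root (D : RootSystemWithBase V) (L : List (Fin D.l)) (β : V) (hβ : β ∈ D.Φ) :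
    D.wordProd L β ∈ D.Φ := by
  induction L with
  | nil => simpa [wordProd_nil] using hβ
  | cons j L ih => rw [wordProd_cons]; exact D.s_root _ ih j

theorem word_pairing_le (D : RootSystemWithBase V) (ω : V) (hω : D.IsMinuscule ω)
    (L : List (Fin D.l)) : ∀ β ∈ D.Φ, D.pairing (D.wordProd L ω) β ≤ 1 := by
  induction L with
  | nil =>
    intro β hβ
    rw [wordProd_nil]
    rcases hω.2 β hβ with h | h | h <;> rw [h] <;> norm_num
  | cons j L ih =>
    intro β hβ
    have h := ih _ (D.s_root β hβ j)
    unfold pairing at h ⊢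
    rwa [inner_s_left, s_s, ← inner_s_left, ← wordProd_cons] at h

theorem ht_cons (D : RootSystemWithBase V) (h : V →ₗ[ℝ] ℝ) (hh : ∀ i, h (D.α i) = 1)
    (ω : V) (j : Fin D.l) (L : List (Fin D.l)) :
    h (ω - D.wordProd (j :: L) ω) =
      h (ω - D.wordProd L ω) + D.pairing (D.wordProd L ω) (D.α j) := by
  rw [wordProd_cons, D.s_apply]
  simp only [map_sub, map_smul, hh, smul_eq_mul, pairing]
  ring

theorem ht_le (D : RootSystemWithBase V) (h : V →ₗ[ℝ] ℝ) (hh : ∀ i, h (D.α i) = 1)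
    (ω : V) (hω : D.IsMinuscule ω) (L : List (Fin D.l)) :
    h (ω - D.wordProd L ω) ≤ L.length := by
  induction L with
  | nil => simp [wordProd_nil]
  | cons j L ih =>
    rw [D.ht_cons h hh]
    have := D.word_pairing_le ω hω L _ (D.α_mem j)
    push_cast [List.length_cons]
    linarith

theorem word_pos (D : RootSystemWithBase V) (h : V →ₗ[ℝ] ℝ) (hh : ∀ i, h (D.α i) = 1)
    (ω : V) (hω : D.IsMinuscule ω) (i : Fin D.l) (hi : D.pairing ω (D.α i) = 0)
    (L : List (Fin D.l)) (hL : h (ω - D.wordProd L ω) = L.length) :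
    D.IsNonnegComb (D.wordProd L (D.α i)) := by
  induction L with
  | nil =>
    refine ⟨Pi.single i 1, fun k => ?_, ?_⟩
    · by_cases hk : k = i
      · subst hk; simp
      · simp [hk]
    · simp [wordProd_nil, Pi.single_apply]
  | cons j L ih =>
    rw [D.ht_cons h hh] at hL
    push_cast [List.length_cons] at hL
    have h1 := D.word_pairing_le ω hω L _ (D.α_mem j)
    have h2 := D.ht_le h hh ω hω L
    have hp : D.pairing (D.wordProd L ω) (D.α j) = 1 := by linarith
    obtain ⟨c, hc0, hc⟩ := ih (by linarith)
    rcases D.base _ (D.word_root (j :: L) _ (D.α_mem i)) with ⟨d, hd0, hd⟩ | ⟨d, hd0, hd⟩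
    · exact ⟨fun k => d k, fun k => Int.cast_nonneg (hd0 k), hd⟩
    exfalso
    have hz : ∀ k, k ≠ j → c k = 0 := by
      intro k hk
      obtain ⟨f, hf⟩ := D.exists_functional (Pi.single k 1)
      have e := congrArg f hd
      rw [wordProd_cons, D.s_apply, map_sub, map_smul, hf j, Pi.single_eq_of_ne hk.symm, hc] at e
      simp only [map_neg, map_sum, map_smul, hf, Pi.single_apply, smul_eq_mul, mul_ite, mul_one,
        mul_zero, Finset.sum_ite_eq', Finset.mem_univ, if_true, sub_zero] at e
      have a1 := hc0 k
      have a2 : (0:ℝ) ≤ d k := by exact_mod_cast hd0 k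
      linarith
    have hb : D.wordProd L (D.α i) = c j • D.α j := by
      rw [hc]
      exact Finset.sum_eq_single j (fun k _ hk => by rw [hz k hk, zero_smul]) (by simp)
    have hcj : c j ≠ 0 := by
      intro h0
      rw [h0, zero_smul] at hb
      exact D.root_ne_zero _ (D.word_root L _ (D.α_mem i)) hb
    have hin : ⟪ω, D.α i⟫ = 0 := by
      have := D.inner_self_ne i
      unfold pairing at hi
      rw [div_eq_zero_iff] at hi
      rcases hi with hi | hi
      · linarith
      · exact absurd hi this
    rw [← D.inner_word L, hb, inner_smul_right] at hin
    have h0 : ⟪D.wordProd L ω, D.α j⟫ = 0 := (mul_eq_zero.1 hin).resolve_left hcj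
    unfold pairing at hp
    rw [h0] at hp
    norm_num at hp

end RootSystemWithBase

/-- Let `ω` be a minuscule weight and let
`w = s_{i₁} · s_{i₂} ⋯ s_{i_k}` be any product of simple reflections (not assumed
reduced) with `ht(ω − w(ω)) = k`.  Then `w ∈ W^I` and `ℓ(w) = k`. -/
theorem stmt4 {V : Type*} [NormedAddCommGroup V] [InnerProductSpace ℝ V]
    (D : RootSystemWithBase V) (ω : V) (hω : D.IsMinuscule ω)
    (L : List (Fin D.l)) (c : Fin D.l → ℝ)
    (hc : ω - D.wordProd L ω = ∑ i, c i • D.α i)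
    (hht : (∑ i, c i) = (L.length : ℝ)) :
    D.wordProd L ∈ D.WI ω ∧ D.len (D.wordProd L) = L.length := by
  obtain ⟨h, hh⟩ := D.exists_functional (fun _ => 1)
  have hL : h (ω - D.wordProd L ω) = L.length := by
    rw [hc, ← hht]
    simp [hh]
  refine ⟨⟨?_, fun i hi => ⟨D.word_pos h hh ω hω i hi L hL, ?_⟩⟩, ?_⟩
  · refine Subgroup.list_prod_mem _ fun x hx => ?_
    obtain ⟨i, _, rfl⟩ := List.mem_map.1 hx
    exact Subgroup.subset_closure ⟨i, rfl⟩
  · exact D.root_ne_zero _ (D.word_root L _ (D.α_mem i))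
  · apply le_antisymm
    · exact Nat.sInf_le ⟨L, rfl, rfl⟩
    · refine le_csInf ⟨_, L, rfl, rfl⟩ ?_
      rintro k ⟨M, rfl, hM⟩
      have := D.ht_le h hh ω hω M
      rw [hM, hL] at this
      exact_mod_cast this
end
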